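/- The pair (GP, 𝓛) is a left Frobenius pair if and only if 𝓛 equals the class of projective modules. -/

import Mathlib

/-!
If the pair is left Frobenius, then `𝓛 ⊆ GP`, and a module `M` in `GP ∩ 𝓛` is projective: `M` sits as
a module of cycles in a projective `P n` of its totally acyclic complex, and exactness of
`Hom(-, M)` provides a retraction `P n → M` (`IsGProj.projective_of_mem`). Conversely all projectives
lie in `𝓛`, because `𝓛` contains `R` and is closed under direct sums and summands.

If `𝓛` is the class of projectives, then `GP` is the class of ordinary Gorenstein projective modules,
and the axioms are Holm's closure properties. They are proved for the following description,
`IsGP`: `M` lies in a class of modules `X` with `Ext^i(X, T) = 0` for `i ≥ 1` and `T` projective, each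
of which embeds into a projective with cokernel again in the class. For this description closure
under extensions, kernels of epimorphisms and summands reduces to one diagram chase each
(`chase_extension`, `chase_kernel`, `chase_summand`) together with the long exact `Ext` sequence.
The equivalence with the definition through complexes is `isGProj_iff_isGP`: dimension shifting
gives the vanishing of `Ext` on cycles, and splicing short exact sequences gives a complex back.
-/


open CategoryTheory CategoryTheory.Limits DirectSum

namespace DualityPaper

variable {R : Type} [Ring R]

/-- The right `R`-module structure on the group of additive maps out of a left `R`-module,
given by `(f • r) m = f (r • m)`. -/
instance charModuleRight (M A : Type) [AddCommGroup M] [AddCommGroup A] [Module R M] :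
    Module Rᵐᵒᵖ (M →+ A) where
  smul r f := f.comp (DistribMulAction.toAddMonoidHom M r.unop)
  one_smul f := AddMonoidHom.ext fun m => by
    show f ((1 : Rᵐᵒᵖ).unop • m) = f m
    simp
  mul_smul r s f := AddMonoidHom.ext fun m => by
    show f ((r * s).unop • m) = f (s.unop • r.unop • m)
    rw [MulOpposite.unop_mul, mul_smul]
  smul_zero r := rfl
  smul_add r f g := rfl
  add_smul r s f := AddMonoidHom.ext fun m => by
    show f ((r + s).unop • m) = f (r.unop • m) + f (s.unop • m)
    rw [MulOpposite.unop_add, add_smul, map_add]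
  zero_smul f := AddMonoidHom.ext fun m => by
    show f ((0 : Rᵐᵒᵖ).unop • m) = 0
    simp

/-- The left `R`-module structure on the group of additive maps out of a right `R`-module. -/
instance charModuleLeft (N A : Type) [AddCommGroup N] [AddCommGroup A] [Module Rᵐᵒᵖ N] :
    Module R (N →+ A) where
  smul r f := f.comp (DistribMulAction.toAddMonoidHom N (MulOpposite.op r))
  one_smul f := AddMonoidHom.ext fun m => by
    show f ((MulOpposite.op (1 : R)) • m) = f m
    simp
  mul_smul r s f := AddMonoidHom.ext fun m => by
    show f (MulOpposite.op (r * s) • m) = f (MulOpposite.op s • MulOpposite.op r • m)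
    rw [MulOpposite.op_mul, mul_smul]
  smul_zero r := rfl
  smul_add r f g := rfl
  add_smul r s f := AddMonoidHom.ext fun m => by
    show f (MulOpposite.op (r + s) • m) = f (MulOpposite.op r • m) + f (MulOpposite.op s • m)
    rw [MulOpposite.op_add, add_smul, map_add]
  zero_smul f := AddMonoidHom.ext fun m => by
    show f (MulOpposite.op (0 : R) • m) = 0
    simp

/-- The character module `M⁺ = Hom_ℤ(M, ℚ/ℤ)` of a left module, as a right module. -/
def charL (M : ModuleCat.{0} R) : ModuleCat.{0} Rᵐᵒᵖ :=
  ModuleCat.of Rᵐᵒᵖ (M →+ AddCircle (1 : ℚ))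

/-- The character module `N⁺ = Hom_ℤ(N, ℚ/ℤ)` of a right module, as a left module. -/
def charR (N : ModuleCat.{0} Rᵐᵒᵖ) : ModuleCat.{0} R :=
  ModuleCat.of R (N →+ AddCircle (1 : ℚ))

/-- A left module over a (possibly noncommutative) ring is flat iff its character module is an
injective right module (Lambek); we take this as the definition of flatness. -/
def IsFlatMod (M : ModuleCat.{0} R) : Prop := CategoryTheory.Injective (charL M)

/-- `f`, `g` form a short exact sequence `0 → A → B → C → 0`. -/
def SES {A B C : ModuleCat.{0} R} (f : A ⟶ B) (g : B ⟶ C) : Prop :=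
  ∃ w : f ≫ g = 0, (ShortComplex.mk f g w).ShortExact

/-- Vanishing of `Ext^n_R(M, N)`. -/
def ExtVanish (n : ℕ) (M N : ModuleCat.{0} R) : Prop :=
  Subsingleton (((_root_.Ext ℤ (ModuleCat.{0} R) n).obj (Opposite.op M)).obj N)

/-- A complete duality pair `(𝓛, 𝓐)` over `R`. -/
structure CompleteDualityPair (𝓛 : Set (ModuleCat.{0} R)) (𝓐 : Set (ModuleCat.{0} Rᵐᵒᵖ)) :
    Prop where
  isoClosed_L : ∀ {M N : ModuleCat.{0} R}, (M ≅ N) → M ∈ 𝓛 → N ∈ 𝓛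
  isoClosed_A : ∀ {M N : ModuleCat.{0} Rᵐᵒᵖ}, (M ≅ N) → M ∈ 𝓐 → N ∈ 𝓐
  char_mem_iff : ∀ M : ModuleCat.{0} R, M ∈ 𝓛 ↔ charL M ∈ 𝓐
  char_mem_iff' : ∀ N : ModuleCat.{0} Rᵐᵒᵖ, N ∈ 𝓐 ↔ charR N ∈ 𝓛
  summands_A : ∀ A ∈ 𝓐, ∀ (B : ModuleCat.{0} Rᵐᵒᵖ) (i : B ⟶ A) (p : A ⟶ B),
    i ≫ p = 𝟙 B → B ∈ 𝓐
  sums_A : ∀ A B : ModuleCat.{0} Rᵐᵒᵖ, A ∈ 𝓐 → B ∈ 𝓐 → ModuleCat.of Rᵐᵒᵖ (A × B) ∈ 𝓐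
  summands_L : ∀ L ∈ 𝓛, ∀ (K : ModuleCat.{0} R) (i : K ⟶ L) (p : L ⟶ K),
    i ≫ p = 𝟙 K → K ∈ 𝓛
  sums_L : ∀ L K : ModuleCat.{0} R, L ∈ 𝓛 → K ∈ 𝓛 → ModuleCat.of R (L × K) ∈ 𝓛
  self_mem : ModuleCat.of R R ∈ 𝓛
  coprod_L : ∀ (ι : Type) (f : ι → ModuleCat.{0} R), (∀ i, f i ∈ 𝓛) →
    ModuleCat.of R (⨁ i, f i) ∈ 𝓛
  ext_L : ∀ {A B C : ModuleCat.{0} R} (f : A ⟶ B) (g : B ⟶ C),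
    SES f g → A ∈ 𝓛 → C ∈ 𝓛 → B ∈ 𝓛

/-- A doubly infinite exact sequence of projectives which stays exact after applying
`Hom_R(-, T)` for every `T` in the class `𝓣`. -/
structure IsTotallyAcyclicWrt (𝓣 : Set (ModuleCat.{0} R))
    (C : ChainComplex (ModuleCat.{0} R) ℤ) : Prop where
  projective : ∀ n, Projective (C.X n)
  exact : ∀ n, (C.sc n).Exact
  homExact : ∀ T ∈ 𝓣, ∀ (n : ℤ) (g : C.X n ⟶ T), C.d (n + 1) n ≫ g = 0 →
    ∃ h : C.X (n - 1) ⟶ T, C.d n (n - 1) ≫ h = g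

/-- `M` is Gorenstein projective relative to the class `𝓣`:  it is a kernel in a
`Hom_R(-, 𝓣)`-exact exact sequence of projective modules. -/
def IsGProj (𝓣 : Set (ModuleCat.{0} R)) (M : ModuleCat.{0} R) : Prop :=
  ∃ C : ChainComplex (ModuleCat.{0} R) ℤ, IsTotallyAcyclicWrt 𝓣 C ∧
    ∃ n : ℤ, Nonempty (M ≅ kernel (C.d n (n - 1)))

/-- `M` is strongly Gorenstein `(𝓛,𝓐)`-projective. -/
def IsSGProj (𝓣 : Set (ModuleCat.{0} R)) (M : ModuleCat.{0} R) : Prop :=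
  ∃ (P : ModuleCat.{0} R) (f : P ⟶ P), Projective P ∧
    (∃ w : f ≫ f = 0, (ShortComplex.mk f f w).Exact) ∧
    (∀ T ∈ 𝓣, ∀ g : P ⟶ T, f ≫ g = 0 → ∃ h : P ⟶ T, f ≫ h = g) ∧
    Nonempty (M ≅ kernel f)

/-- Resolution dimension of `M` with respect to a class `𝓒` is at most `n`. -/
def ResDimLE (𝓒 : Set (ModuleCat.{0} R)) : ℕ → ModuleCat.{0} R → Prop
  | 0, M => M ∈ 𝓒
  | n + 1, M => ∃ (K C : ModuleCat.{0} R) (f : K ⟶ C) (g : C ⟶ M),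
      C ∈ 𝓒 ∧ SES f g ∧ ResDimLE 𝓒 n K

/-- `K` is an `n`-th kernel of an exact sequence `0 → K → C_{n-1} → ⋯ → C₀ → M → 0`
with all `Cᵢ` in `𝓒`. -/
def IsNthSyzygy (𝓒 : Set (ModuleCat.{0} R)) : ℕ → ModuleCat.{0} R → ModuleCat.{0} R → Prop
  | 0, M, K => Nonempty (K ≅ M)
  | n + 1, M, K => ∃ (S C : ModuleCat.{0} R) (f : S ⟶ C) (g : C ⟶ M),
      C ∈ 𝓒 ∧ SES f g ∧ IsNthSyzygy 𝓒 n S K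

/-- A left Frobenius pair `(𝓧, ω)`. -/
structure LeftFrobeniusPair (𝓧 ω : Set (ModuleCat.{0} R)) : Prop where
  summands_X : ∀ X ∈ 𝓧, ∀ (Y : ModuleCat.{0} R) (i : Y ⟶ X) (p : X ⟶ Y),
    i ≫ p = 𝟙 Y → Y ∈ 𝓧
  extensions_X : ∀ {A B C : ModuleCat.{0} R} (f : A ⟶ B) (g : B ⟶ C),
    SES f g → A ∈ 𝓧 → C ∈ 𝓧 → B ∈ 𝓧
  kerEpi_X : ∀ {A B C : ModuleCat.{0} R} (f : A ⟶ B) (g : B ⟶ C),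
    SES f g → B ∈ 𝓧 → C ∈ 𝓧 → A ∈ 𝓧
  subset : ω ⊆ 𝓧
  inj : ∀ X ∈ 𝓧, ∀ W ∈ ω, ∀ i : ℕ, 1 ≤ i → ExtVanish i X W
  cogen : ∀ X ∈ 𝓧, ∃ (W X' : ModuleCat.{0} R) (f : X ⟶ W) (g : W ⟶ X'),
    W ∈ ω ∧ X' ∈ 𝓧 ∧ SES f g
  summands_ω : ∀ W ∈ ω, ∀ (V : ModuleCat.{0} R) (i : V ⟶ W) (p : W ⟶ V),
    i ≫ p = 𝟙 V → V ∈ ω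


/-! ### Short exact sequences of modules -/

lemma ses_iff {A B C : ModuleCat.{0} R} (f : A ⟶ B) (g : B ⟶ C) :
    SES f g ↔ Function.Injective f ∧ Function.Surjective g ∧ Function.Exact f g := by
  constructor
  · rintro ⟨w, h⟩
    exact ⟨h.moduleCat_injective_f, h.moduleCat_surjective_g,
      (ShortComplex.ShortExact.moduleCat_exact_iff_function_exact _).1 h.exact⟩
  · rintro ⟨hf, hg, hfg⟩
    have w : f ≫ g = 0 := by
      ext x
      exact (hfg _).2 ⟨x, rfl⟩
    have : Mono f := (ModuleCat.mono_iff_injective f).2 hf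
    have : Epi g := (ModuleCat.epi_iff_surjective g).2 hg
    exact ⟨w, ⟨(ShortComplex.mk f g w).moduleCat_exact_iff.2 fun x hx => (hfg x).1 hx⟩⟩

lemma ses_of_linear {A B C : Type} [AddCommGroup A] [AddCommGroup B] [AddCommGroup C]
    [Module R A] [Module R B] [Module R C] (f : A →ₗ[R] B) (g : B →ₗ[R] C)
    (hf : Function.Injective f) (hg : Function.Surjective g) (h : Function.Exact f g) :
    SES (ModuleCat.ofHom f) (ModuleCat.ofHom g) :=
  (ses_iff _ _).2 ⟨hf, hg, h⟩

lemma ses_mkQ {A B : Type} [AddCommGroup A] [AddCommGroup B]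
    [Module R A] [Module R B] (f : A →ₗ[R] B) (hf : Function.Injective f) :
    SES (ModuleCat.ofHom f) (ModuleCat.ofHom f.range.mkQ) :=
  ses_of_linear _ _ hf f.range.mkQ_surjective (LinearMap.exact_map_mkQ_range f)

/-- A map killing the kernel of a surjection factors through it. -/
lemma exists_desc {A B C : Type} [AddCommGroup A] [AddCommGroup B] [AddCommGroup C]
    [Module R A] [Module R B] [Module R C] (p : A →ₗ[R] B) (φ : A →ₗ[R] C)
    (hp : Function.Surjective p) (h : ∀ x, p x = 0 → φ x = 0) :
    ∃ u : B →ₗ[R] C, ∀ x, u (p x) = φ x := by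
  refine ⟨(p.ker.liftQ φ fun x hx => h x hx).comp
    (p.quotKerEquivOfSurjective hp).symm.toLinearMap, fun x => ?_⟩
  have : (p.quotKerEquivOfSurjective hp).symm (p x) = p.ker.mkQ x := by
    rw [LinearEquiv.symm_apply_eq]; rfl
  simp only [LinearMap.comp_apply, LinearEquiv.coe_coe, this]
  rfl

/-- The `3 × 3` lemma behind the horseshoe construction: if `A` and `C` embed into `P` and `Q`,
and `A → P` extends to `α : B → P`, then `B` embeds into `P × Q` and the quotient is an extension
of `Q / C` by `P / A`. -/
lemma chase_extension {A B C P A' Q C' : Type} [AddCommGroup A] [AddCommGroup B] [AddCommGroup C]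
    [AddCommGroup P] [AddCommGroup A'] [AddCommGroup Q] [AddCommGroup C']
    [Module R A] [Module R B] [Module R C] [Module R P] [Module R A'] [Module R Q] [Module R C']
    (i : A →ₗ[R] B) (p : B →ₗ[R] C) (a : A →ₗ[R] P) (a' : P →ₗ[R] A')
    (c : C →ₗ[R] Q) (c' : Q →ₗ[R] C') (α : B →ₗ[R] P) (hα : ∀ x, α (i x) = a x)
    (hp : Function.Surjective p) (hip : Function.Exact i p)
    (ha : Function.Injective a) (ha' : Function.Surjective a') (haa : Function.Exact a a')
    (hc : Function.Injective c) (hc' : Function.Surjective c') (hcc : Function.Exact c c') :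
    Function.Injective (α.prod (c ∘ₗ p)) ∧
    ∃ (u : A' →ₗ[R] (P × Q) ⧸ (α.prod (c ∘ₗ p)).range)
      (v : ((P × Q) ⧸ (α.prod (c ∘ₗ p)).range) →ₗ[R] C'),
      Function.Injective u ∧ Function.Surjective v ∧ Function.Exact u v := by
  set β := α.prod (c ∘ₗ p) with hβ
  have hβx : ∀ x, β x = (α x, c (p x)) := fun x => rfl
  refine ⟨?_, ?_⟩
  · rw [injective_iff_map_eq_zero]
    intro x hx
    rw [hβx, Prod.mk_eq_zero] at hx
    have h1 : p x = 0 := hc (by rw [hx.2, map_zero])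
    obtain ⟨y, rfl⟩ := (hip x).1 h1
    have : y = 0 := ha (by rw [← hα, hx.1, map_zero])
    rw [this, map_zero]
  obtain ⟨u, hu⟩ := exists_desc a' (β.range.mkQ ∘ₗ LinearMap.inl R P Q) ha' (by
    intro x hx
    obtain ⟨y, rfl⟩ := (haa x).1 hx
    rw [LinearMap.comp_apply, Submodule.mkQ_apply, Submodule.Quotient.mk_eq_zero]
    exact ⟨i y, by simp [hβx, hα, hip.apply_apply_eq_zero]⟩)
  obtain ⟨v, hv⟩ := exists_desc β.range.mkQ (c' ∘ₗ LinearMap.snd R P Q) β.range.mkQ_surjective (by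
    intro x hx
    rw [Submodule.mkQ_apply, Submodule.Quotient.mk_eq_zero] at hx
    obtain ⟨y, rfl⟩ := hx
    simp [hβx, hcc.apply_apply_eq_zero])
  refine ⟨u, v, ?_, ?_, ?_⟩
  · rw [injective_iff_map_eq_zero]
    intro x hx
    obtain ⟨x, rfl⟩ := ha' x
    rw [hu, LinearMap.comp_apply, Submodule.mkQ_apply, Submodule.Quotient.mk_eq_zero] at hx
    obtain ⟨y, hy⟩ := hx
    simp only [hβx, LinearMap.inl_apply, Prod.mk.injEq] at hy
    have h1 : p y = 0 := hc (by rw [hy.2, map_zero])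
    obtain ⟨z, rfl⟩ := (hip y).1 h1
    rw [← hy.1, hα, haa.apply_apply_eq_zero]
  · intro x
    obtain ⟨q, rfl⟩ := hc' x
    exact ⟨β.range.mkQ (0, q), by rw [hv]; rfl⟩
  · intro x
    obtain ⟨⟨x, q⟩, rfl⟩ := β.range.mkQ_surjective x
    rw [hv]
    constructor
    · intro h
      obtain ⟨y, hy⟩ := (hcc q).1 h
      obtain ⟨y, rfl⟩ := hp y
      refine ⟨a' (x - α y), ?_⟩
      rw [hu, LinearMap.comp_apply, ← sub_eq_zero, ← map_sub, Submodule.mkQ_apply,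
        Submodule.Quotient.mk_eq_zero]
      exact ⟨-y, by simp [hβx, hy]⟩
    · rintro ⟨y, hy⟩
      obtain ⟨y, rfl⟩ := ha' y
      rw [hu] at hy
      rw [← hv, ← hy, LinearMap.comp_apply, hv]
      simp

/-- For `A ⊆ B ⊆ P`, the quotient `P / A` is an extension of `P / B` by `B / A`. -/
lemma chase_kernel {A B C P B' : Type} [AddCommGroup A] [AddCommGroup B] [AddCommGroup C]
    [AddCommGroup P] [AddCommGroup B']
    [Module R A] [Module R B] [Module R C] [Module R P] [Module R B']
    (i : A →ₗ[R] B) (p : B →ₗ[R] C) (b : B →ₗ[R] P) (b' : P →ₗ[R] B')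
    (hp : Function.Surjective p) (hip : Function.Exact i p)
    (hb : Function.Injective b) (hb' : Function.Surjective b') (hbb : Function.Exact b b') :
    ∃ (u : C →ₗ[R] P ⧸ (b ∘ₗ i).range) (v : (P ⧸ (b ∘ₗ i).range) →ₗ[R] B'),
      Function.Injective u ∧ Function.Surjective v ∧ Function.Exact u v := by
  obtain ⟨u, hu⟩ := exists_desc p ((b ∘ₗ i).range.mkQ ∘ₗ b) hp (by
    intro x hx
    obtain ⟨y, rfl⟩ := (hip x).1 hx
    rw [LinearMap.comp_apply, Submodule.mkQ_apply, Submodule.Quotient.mk_eq_zero]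
    exact ⟨y, rfl⟩)
  obtain ⟨v, hv⟩ := exists_desc (b ∘ₗ i).range.mkQ b' (b ∘ₗ i).range.mkQ_surjective (by
    intro x hx
    rw [Submodule.mkQ_apply, Submodule.Quotient.mk_eq_zero] at hx
    obtain ⟨y, rfl⟩ := hx
    exact hbb.apply_apply_eq_zero _)
  refine ⟨u, v, ?_, ?_, ?_⟩
  · rw [injective_iff_map_eq_zero]
    intro x hx
    obtain ⟨x, rfl⟩ := hp x
    rw [hu, LinearMap.comp_apply, Submodule.mkQ_apply, Submodule.Quotient.mk_eq_zero] at hx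
    obtain ⟨y, hy⟩ := hx
    rw [← hb hy, hip.apply_apply_eq_zero]
  · intro x
    obtain ⟨q, rfl⟩ := hb' x
    exact ⟨_, hv q⟩
  · intro x
    obtain ⟨x, rfl⟩ := (b ∘ₗ i).range.mkQ_surjective x
    rw [hv]
    constructor
    · intro h
      obtain ⟨y, rfl⟩ := (hbb x).1 h
      exact ⟨p y, hu y⟩
    · rintro ⟨y, hy⟩
      obtain ⟨y, rfl⟩ := hp y
      rw [hu] at hy
      rw [← hv, ← hy, LinearMap.comp_apply, hv, hbb.apply_apply_eq_zero]

/-- If `Y` is a direct summand of `X ⊆ P`, then `P / Y × Y` is an extension of `P / X` by `X`. -/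
lemma chase_summand {X Y P X' : Type} [AddCommGroup X] [AddCommGroup Y]
    [AddCommGroup P] [AddCommGroup X']
    [Module R X] [Module R Y] [Module R P] [Module R X']
    (i : Y →ₗ[R] X) (p : X →ₗ[R] Y) (hip : ∀ y, p (i y) = y) (b : X →ₗ[R] P) (b' : P →ₗ[R] X')
    (hb : Function.Injective b) (hb' : Function.Surjective b') (hbb : Function.Exact b b') :
    ∃ (u : X →ₗ[R] (P ⧸ (b ∘ₗ i).range) × Y) (v : ((P ⧸ (b ∘ₗ i).range) × Y) →ₗ[R] X'),
      Function.Injective u ∧ Function.Surjective v ∧ Function.Exact u v := by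
  obtain ⟨v, hv⟩ := exists_desc (b ∘ₗ i).range.mkQ b' (b ∘ₗ i).range.mkQ_surjective (by
    intro x hx
    rw [Submodule.mkQ_apply, Submodule.Quotient.mk_eq_zero] at hx
    obtain ⟨y, rfl⟩ := hx
    exact hbb.apply_apply_eq_zero _)
  refine ⟨((b ∘ₗ i).range.mkQ ∘ₗ b).prod p, v ∘ₗ LinearMap.fst R _ _, ?_, ?_, ?_⟩
  · rw [injective_iff_map_eq_zero]
    intro x hx
    obtain ⟨h1, h2⟩ := Prod.mk_eq_zero.1 hx
    rw [LinearMap.comp_apply, Submodule.mkQ_apply, Submodule.Quotient.mk_eq_zero] at h1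
    obtain ⟨y, hy⟩ := h1
    obtain rfl := hb hy
    rw [hip] at h2
    rw [h2, map_zero]
  · intro x
    obtain ⟨q, rfl⟩ := hb' x
    exact ⟨((b ∘ₗ i).range.mkQ q, 0), hv q⟩
  · rintro ⟨x, y⟩
    obtain ⟨x, rfl⟩ := (b ∘ₗ i).range.mkQ_surjective x
    simp only [LinearMap.comp_apply, LinearMap.fst_apply, hv]
    constructor
    · intro h
      obtain ⟨x, rfl⟩ := (hbb x).1 h
      -- the correction by `i (y - p x)` is invisible modulo `Y`
      refine ⟨x + i (y - p x), Prod.ext ?_ ?_⟩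
      · change (b ∘ₗ i).range.mkQ (b (x + i (y - p x))) = _
        rw [← sub_eq_zero, ← map_sub, Submodule.mkQ_apply, Submodule.Quotient.mk_eq_zero]
        exact ⟨y - p x, by simp⟩
      · change p (x + i (y - p x)) = y
        rw [map_add, hip]; abel
    · rintro ⟨z, hz⟩
      have h1 : (b ∘ₗ i).range.mkQ (b z) = (b ∘ₗ i).range.mkQ x := congrArg Prod.fst hz
      rw [← hv, ← h1, hv, hbb.apply_apply_eq_zero]

/-! ### Vanishing of Ext into projective modules -/

/-- Comparison of the two `Ext` functors: the one obtained by deriving `Hom(-, N)` vanishes when the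
one defined through the derived category does, since both are computed by cocycles on a projective
resolution. -/
lemma extVanish_of_subsingleton (M N : ModuleCat.{0} R) (n : ℕ)
    (h : Subsingleton (Abelian.Ext.{0} M N (n + 1))) : ExtVanish (n + 1) M N := by
  let P := projectiveResolution M
  have hz : IsZero (((_root_.Ext ℤ (ModuleCat.{0} R) (n + 1)).obj (Opposite.op M)).obj N) := by
    refine IsZero.of_iso ?_ (P.isoExt (R := ℤ) (n + 1) N)
    rw [← HomologicalComplex.exactAt_iff_isZero_homology,
      HomologicalComplex.exactAt_iff' _ n (n + 1) (n + 1 + 1) (by simp) (by simp),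
      ShortComplex.moduleCat_exact_iff]
    intro (x : P.complex.X (n + 1) ⟶ N) hx
    have hx' : P.complex.d (n + 1 + 1) (n + 1) ≫ x = 0 := hx
    obtain ⟨y, hy⟩ := (P.extMk_eq_zero_iff x (n + 1 + 1) rfl hx' n rfl).1
      (Subsingleton.elim _ _)
    exact ⟨y, hy⟩
  exact ModuleCat.subsingleton_of_isZero hz

/-- `Ext^i(X, T) = 0` for all projective `T` and all `i ≥ 1`. -/
def ExtAcyclic (X : ModuleCat.{0} R) : Prop :=
  ∀ T : ModuleCat.{0} R, Projective T → ∀ n : ℕ, Subsingleton (Abelian.Ext.{0} X T (n + 1))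

lemma ExtAcyclic.of_projective {X : ModuleCat.{0} R} (hX : Projective X) : ExtAcyclic X :=
  fun T _ n => Abelian.Ext.subsingleton_of_projective X T n

lemma ExtAcyclic.of_retract {X Y : ModuleCat.{0} R} (hX : ExtAcyclic X) (i : Y ⟶ X) (p : X ⟶ Y)
    (h : i ≫ p = 𝟙 Y) : ExtAcyclic Y := by
  intro T hT n
  have := hX T hT n
  refine subsingleton_of_forall_eq 0 fun x => ?_
  rw [← Abelian.Ext.mk₀_id_comp x, ← h, ← Abelian.Ext.mk₀_comp_mk₀_assoc,
    Subsingleton.elim ((Abelian.Ext.mk₀ p).comp x (zero_add _)) 0, Abelian.Ext.comp_zero]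

lemma ExtAcyclic.of_extension {A B C : ModuleCat.{0} R} {f : A ⟶ B} {g : B ⟶ C} (h : SES f g)
    (hA : ExtAcyclic A) (hC : ExtAcyclic C) : ExtAcyclic B := by
  obtain ⟨w, h⟩ := h
  intro T hT n
  have := hA T hT n
  have := hC T hT n
  refine subsingleton_of_forall_eq 0 fun x => ?_
  obtain ⟨y, rfl⟩ := Abelian.Ext.contravariant_sequence_exact₂ h T x
    (Subsingleton.elim (α := Abelian.Ext.{0} A T (n+1)) _ _)
  rw [Subsingleton.elim (α := Abelian.Ext.{0} C T (n+1)) y 0, Abelian.Ext.comp_zero]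

lemma ExtAcyclic.of_kernel {A B C : ModuleCat.{0} R} {f : A ⟶ B} {g : B ⟶ C} (h : SES f g)
    (hB : ExtAcyclic B) (hC : ExtAcyclic C) : ExtAcyclic A := by
  obtain ⟨w, h⟩ := h
  intro T hT n
  have := hB T hT n
  have := hC T hT (n + 1)
  refine subsingleton_of_forall_eq 0 fun x => ?_
  obtain ⟨y, rfl⟩ := Abelian.Ext.contravariant_sequence_exact₁ h T x (add_comm 1 (n + 1))
    (Subsingleton.elim (α := Abelian.Ext.{0} C T (n + 1 + 1)) _ _)
  rw [Subsingleton.elim (α := Abelian.Ext.{0} B T (n+1)) y 0, Abelian.Ext.comp_zero]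

lemma ExtAcyclic.exists_extend {A B C : ModuleCat.{0} R} {f : A ⟶ B} {g : B ⟶ C} (h : SES f g)
    (hC : ExtAcyclic C) {T : ModuleCat.{0} R} (hT : Projective T) (φ : A ⟶ T) :
    ∃ ψ : B ⟶ T, f ≫ ψ = φ := by
  obtain ⟨w, h⟩ := h
  have := hC T hT 0
  obtain ⟨y, hy⟩ := Abelian.Ext.contravariant_sequence_exact₁ h T (Abelian.Ext.mk₀ φ) (add_zero 1)
    (Subsingleton.elim (α := Abelian.Ext.{0} C T (0 + 1)) _ _)
  obtain ⟨ψ, rfl⟩ := (Abelian.Ext.mk₀_bijective _ _).2 y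
  rw [Abelian.Ext.mk₀_comp_mk₀] at hy
  exact ⟨ψ, (Abelian.Ext.mk₀_bijective _ _).1 hy⟩

/-- Given a presentation `0 → A → B → C → 0` with `B` projective, `Ext¹(C, T) = 0` as soon as every
map `A → T` extends to `B`. -/
lemma ext_one_of_extend {A B C : ModuleCat.{0} R} {f : A ⟶ B} {g : B ⟶ C} (h : SES f g)
    (hB : Projective B) {T : ModuleCat.{0} R}
    (H : ∀ φ : A ⟶ T, ∃ ψ : B ⟶ T, f ≫ ψ = φ) : Subsingleton (Abelian.Ext.{0} C T (0 + 1)) := by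
  obtain ⟨w, h⟩ := h
  refine subsingleton_of_forall_eq 0 fun x => ?_
  obtain ⟨y, rfl⟩ := Abelian.Ext.contravariant_sequence_exact₃ h T x
    (Abelian.Ext.eq_zero_of_projective _) (n₀ := 0) rfl
  obtain ⟨φ, rfl⟩ := (Abelian.Ext.mk₀_bijective _ _).2 y
  obtain ⟨ψ, rfl⟩ := H φ
  rw [← Abelian.Ext.mk₀_comp_mk₀]
  exact h.extClass_comp_assoc _

lemma ext_succ_of_syzygy {A B C : ModuleCat.{0} R} {f : A ⟶ B} {g : B ⟶ C} (h : SES f g)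
    (hB : Projective B) {T : ModuleCat.{0} R} (n : ℕ)
    (H : Subsingleton (Abelian.Ext.{0} A T (n + 1))) :
    Subsingleton (Abelian.Ext.{0} C T (n + 1 + 1)) := by
  obtain ⟨w, h⟩ := h
  refine subsingleton_of_forall_eq 0 fun x => ?_
  obtain ⟨y, rfl⟩ := Abelian.Ext.contravariant_sequence_exact₃ h T x
    (Abelian.Ext.eq_zero_of_projective _) (n₀ := n + 1) (add_comm _ _)
  rw [Subsingleton.elim (α := Abelian.Ext.{0} A T (n+1)) y 0, Abelian.Ext.comp_zero]

/-! ### Gorenstein projective modules through right coresolutions -/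

/-- Gorenstein projective modules, encoded coinductively: `M` belongs to a class of `Ext`-acyclic
modules each of which embeds into a projective module with quotient again in the class. Only the
right half of the totally acyclic complex is recorded, the left half being a projective
resolution. -/
def IsGP (M : ModuleCat.{0} R) : Prop :=
  ∃ 𝓒 : Set (ModuleCat.{0} R), M ∈ 𝓒 ∧ ∀ X ∈ 𝓒, ExtAcyclic X ∧
    ∃ (P X' : ModuleCat.{0} R) (f : X ⟶ P) (g : P ⟶ X'), Projective P ∧ X' ∈ 𝓒 ∧ SES f g

lemma IsGP.extAcyclic {M : ModuleCat.{0} R} (h : IsGP M) : ExtAcyclic M := by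
  obtain ⟨𝓒, hM, h⟩ := h
  exact (h M hM).1

lemma IsGP.exists_ses {M : ModuleCat.{0} R} (h : IsGP M) :
    ∃ (P M' : ModuleCat.{0} R) (f : M ⟶ P) (g : P ⟶ M'), Projective P ∧ IsGP M' ∧ SES f g := by
  obtain ⟨𝓒, hM, h⟩ := h
  obtain ⟨P, M', f, g, hP, hM', hs⟩ := (h M hM).2
  exact ⟨P, M', f, g, hP, ⟨𝓒, hM', h⟩, hs⟩

/-- The class of Gorenstein projective modules contains every `Ext`-acyclic module that embeds into a
projective with Gorenstein projective quotient. -/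
lemma IsGP.of_ses {M P M' : ModuleCat.{0} R} {f : M ⟶ P} {g : P ⟶ M'} (hM : ExtAcyclic M)
    (hP : Projective P) (hM' : IsGP M') (hs : SES f g) : IsGP M := by
  refine ⟨{X | IsGP X ∨ X = M}, Or.inr rfl, ?_⟩
  rintro X (hX | rfl)
  · obtain ⟨Q, X', f', g', hQ, hX', hs'⟩ := hX.exists_ses
    exact ⟨hX.extAcyclic, Q, X', f', g', hQ, Or.inl hX', hs'⟩
  · exact ⟨hM, P, M', f, g, hP, Or.inl hM', hs⟩

lemma IsGP.of_projective {P : ModuleCat.{0} R} (hP : Projective P) : IsGP P := by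
  refine ⟨{X | Projective X}, hP, fun X hX => ⟨ExtAcyclic.of_projective hX, X,
    ModuleCat.of R PUnit, 𝟙 X, 0, hX, ?_, ?_⟩⟩
  · exact (ModuleCat.isZero_of_subsingleton _).projective
  · rw [ses_iff]
    refine ⟨fun _ _ h => h, fun x => ⟨0, Subsingleton.elim _ _⟩, fun x => ?_⟩
    exact ⟨fun _ => ⟨x, rfl⟩, fun _ => Subsingleton.elim _ _⟩

lemma projective_prod {P Q : ModuleCat.{0} R} (hP : Projective P) (hQ : Projective Q) :
    Projective (ModuleCat.of R (P × Q)) := by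
  have : Module.Projective R P := (IsProjective.iff_projective P).2 hP
  have : Module.Projective R Q := (IsProjective.iff_projective Q).2 hQ
  exact (IsProjective.iff_projective (P × Q)).1 inferInstance

lemma IsGP.of_extension {A B C : ModuleCat.{0} R} {f : A ⟶ B} {g : B ⟶ C} (h : SES f g)
    (hA : IsGP A) (hC : IsGP C) : IsGP B := by
  refine ⟨{B | ∃ (A C : ModuleCat.{0} R) (f : A ⟶ B) (g : B ⟶ C), SES f g ∧ IsGP A ∧ IsGP C},
    ⟨A, C, f, g, h, hA, hC⟩, ?_⟩
  rintro B ⟨A, C, f, g, h, hA, hC⟩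
  refine ⟨ExtAcyclic.of_extension h hA.extAcyclic hC.extAcyclic, ?_⟩
  obtain ⟨P, A', a, a', hP, hA', ha⟩ := hA.exists_ses
  obtain ⟨Q, C', c, c', hQ, hC', hc⟩ := hC.exists_ses
  obtain ⟨α, hα⟩ := hC.extAcyclic.exists_extend h hP a
  rw [ses_iff] at h ha hc
  obtain ⟨hβ, u, v, hu, hv, huv⟩ := chase_extension f.hom g.hom a.hom a'.hom c.hom c'.hom α.hom
    (fun x => by rw [← hα]; rfl) h.2.1 h.2.2 ha.1 ha.2.1 ha.2.2 hc.1 hc.2.1 hc.2.2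
  exact ⟨ModuleCat.of R (P × Q), _, _, _, projective_prod hP hQ,
    ⟨A', C', _, _, ses_of_linear u v hu hv huv, hA', hC'⟩, ses_mkQ _ hβ⟩

/-- If `B` embeds into `P`, then so does `A`, and `P / A` is an extension of the Gorenstein projective
modules `P / B` and `C`. -/
lemma IsGP.of_kernel {A B C : ModuleCat.{0} R} {f : A ⟶ B} {g : B ⟶ C} (h : SES f g)
    (hB : IsGP B) (hC : IsGP C) : IsGP A := by
  have hA := ExtAcyclic.of_kernel h hB.extAcyclic hC.extAcyclic
  obtain ⟨P, B', b, b', hP, hB', hb⟩ := hB.exists_ses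
  rw [ses_iff] at h hb
  obtain ⟨u, v, hu, hv, huv⟩ := chase_kernel f.hom g.hom b.hom b'.hom h.2.1 h.2.2
    hb.1 hb.2.1 hb.2.2
  exact IsGP.of_ses hA hP (IsGP.of_extension (ses_of_linear u v hu hv huv) hC hB')
    (ses_mkQ (b.hom ∘ₗ f.hom) (hb.1.comp h.1))

/-- The class of all retracts of Gorenstein projectives witnesses the coinductive definition: for `Y`
a retract of `X ⊆ P`, the module `P / Y × Y` is an extension of `P / X` by `X`. -/
lemma IsGP.of_retract {X Y : ModuleCat.{0} R} (hX : IsGP X) (i : Y ⟶ X) (p : X ⟶ Y)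
    (h : i ≫ p = 𝟙 Y) : IsGP Y := by
  refine ⟨{Y | ∃ (X : ModuleCat.{0} R) (i : Y ⟶ X) (p : X ⟶ Y), i ≫ p = 𝟙 Y ∧ IsGP X},
    ⟨X, i, p, h, hX⟩, ?_⟩
  rintro Y ⟨X, i, p, h, hX⟩
  refine ⟨hX.extAcyclic.of_retract i p h, ?_⟩
  obtain ⟨P, X', b, b', hP, hX', hb⟩ := hX.exists_ses
  rw [ses_iff] at hb
  have hip : ∀ y, p.hom (i.hom y) = y := fun y => congrArg (fun φ : Y ⟶ Y => φ.hom y) h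
  obtain ⟨u, v, hu, hv, huv⟩ := chase_summand i.hom p.hom hip b.hom b'.hom hb.1 hb.2.1 hb.2.2
  refine ⟨P, _, _, _, hP, ⟨ModuleCat.of R ((P ⧸ (b.hom ∘ₗ i.hom).range) × Y),
    ModuleCat.ofHom (LinearMap.inl R _ _), ModuleCat.ofHom (LinearMap.fst R _ _), ?_,
    IsGP.of_extension (ses_of_linear u v hu hv huv) hX hX'⟩,
    ses_mkQ (b.hom ∘ₗ i.hom) (hb.1.comp (Function.LeftInverse.injective hip))⟩
  ext x
  rfl

lemma IsGP.exists_syzygy {M : ModuleCat.{0} R} (h : IsGP M) :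
    ∃ (M' P : ModuleCat.{0} R) (f : M' ⟶ P) (g : P ⟶ M), Projective P ∧ IsGP M' ∧ SES f g := by
  have hs : SES (kernel.ι (Projective.π M)) (Projective.π M) :=
    ⟨kernel.condition _, { exact := ShortComplex.exact_of_f_is_kernel _ (kernelIsKernel _) }⟩
  exact ⟨_, _, _, _, inferInstance, IsGP.of_kernel hs (IsGP.of_projective inferInstance) h, hs⟩

/-! ### Comparison with totally acyclic complexes -/

/-- The class of projective modules. -/
abbrev projClass (R : Type) [Ring R] : Set (ModuleCat.{0} R) := {P | Projective P}

/-- `Hom`-exactness with free indices, avoiding transport along `n + 1 - 1 = n`. -/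
lemma IsTotallyAcyclicWrt.homExact' {𝓣 : Set (ModuleCat.{0} R)}
    {C : ChainComplex (ModuleCat.{0} R) ℤ}
    (hC : IsTotallyAcyclicWrt 𝓣 C) {T : ModuleCat.{0} R} (hT : T ∈ 𝓣) {i j k : ℤ} (hi : i = j + 1)
    (hj : j = k + 1) (g : C.X j ⟶ T) (hg : C.d i j ≫ g = 0) :
    ∃ h : C.X k ⟶ T, C.d j k ≫ h = g := by
  obtain rfl : k = j - 1 := by omega
  subst hi
  exact hC.homExact T hT j g hg

/-- The cycles of a totally acyclic complex fit into sequences `0 → Z i → X i → Z j → 0`,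
where `i = j + 1`. -/
lemma IsTotallyAcyclicWrt.ses {𝓣 : Set (ModuleCat.{0} R)}
    {C : ChainComplex (ModuleCat.{0} R) ℤ}
    (hC : IsTotallyAcyclicWrt 𝓣 C) {i j k : ℤ} (hi : i = j + 1) (hj : j = k + 1) :
    SES (kernel.ι (C.d i j)) (kernel.lift (C.d j k) (C.d i j) (C.d_comp_d i j k)) := by
  have hex : (C.sc' i j k).Exact := by
    rw [← C.exactAt_iff' i j k (by simp [hi]) (by simp [hj])]
    exact hC.exact j
  have hepi : Epi (kernel.lift (C.d j k) (C.d i j) (C.d_comp_d i j k)) :=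
    (ShortComplex.exact_iff_epi_kernel_lift _).1 hex
  have w : kernel.ι (C.d i j) ≫ kernel.lift (C.d j k) (C.d i j) (C.d_comp_d i j k) = 0 := by
    rw [← cancel_mono (kernel.ι (C.d j k))]
    simp
  refine ⟨w, { exact := ShortComplex.exact_of_f_is_kernel _ ?_ }⟩
  refine KernelFork.IsLimit.ofι' _ w fun φ hφ => ⟨kernel.lift _ φ ?_, kernel.lift_ι _ _ _⟩
  have := congrArg (· ≫ kernel.ι (C.d j k)) hφ
  simpa using this

/-- Cycles of a totally acyclic complex are Gorenstein projective; `Ext`-acyclicity is obtained by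
dimension shifting along the complex, `Hom`-exactness giving the vanishing of `Ext¹`. -/
lemma IsTotallyAcyclicWrt.isGP_kernel {C : ChainComplex (ModuleCat.{0} R) ℤ}
    (hC : IsTotallyAcyclicWrt (projClass R) C) {i j : ℤ} (hi : i = j + 1) :
    IsGP (kernel (C.d i j)) := by
  refine ⟨{X | ∃ i j : ℤ, i = j + 1 ∧ X = kernel (C.d i j)}, ⟨i, j, hi, rfl⟩, ?_⟩
  rintro _ ⟨j, k, hj, rfl⟩
  refine ⟨?_, C.X j, kernel (C.d k (k - 1)), _, _, hC.projective j, ⟨k, k - 1, by omega, rfl⟩,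
    hC.ses hj (by omega)⟩
  intro T hT n
  induction n generalizing j k with
  | zero =>
    refine ext_one_of_extend (hC.ses (i := j + 1) rfl hj) (hC.projective _) fun φ => ?_
    have hs := hC.ses (i := j + 1 + 1) (j := j + 1) (k := j) rfl rfl
    -- `X (j + 2) → Z (j + 1) → T` kills the boundaries, hence extends to `X (j + 1)`
    obtain ⟨ψ, hψ⟩ := hC.homExact' hT (i := j + 1 + 1 + 1) (j := j + 1 + 1) (k := j + 1) rfl rfl
      (kernel.lift (C.d (j + 1) j) (C.d (j + 1 + 1) (j + 1)) (C.d_comp_d _ _ _) ≫ φ) (by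
        rw [← Category.assoc]
        have : C.d (j + 1 + 1 + 1) (j + 1 + 1) ≫
            kernel.lift (C.d (j + 1) j) (C.d (j + 1 + 1) (j + 1)) (C.d_comp_d _ _ _) = 0 := by
          rw [← cancel_mono (kernel.ι _)]
          simp
        rw [this, zero_comp])
    refine ⟨ψ, ?_⟩
    have : Epi (kernel.lift (C.d (j + 1) j) (C.d (j + 1 + 1) (j + 1)) (C.d_comp_d _ _ _)) :=
      hs.2.epi_g
    rw [← cancel_epi (kernel.lift (C.d (j + 1) j) (C.d (j + 1 + 1) (j + 1)) (C.d_comp_d _ _ _)),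
      ← hψ, kernel.lift_ι_assoc]
  | succ n ih =>
    exact ext_succ_of_syzygy (hC.ses (i := j + 1) rfl hj) (hC.projective _) n (ih (j + 1) j rfl)

/-- A relation that is total in both directions has a bi-infinite chain through any given
element. -/
lemma exists_int_sequence {α : Type*} (r : α → α → Prop) (h₁ : ∀ a, ∃ b, r a b)
    (h₂ : ∀ a, ∃ b, r b a) (a : α) : ∃ K : ℤ → α, K 0 = a ∧ ∀ n, r (K (n + 1)) (K n) := by
  choose s hs using h₁
  choose t ht using h₂
  refine ⟨fun n => match n with
    | Int.ofNat n => t^[n] a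
    | Int.negSucc n => s^[n + 1] a, rfl, ?_⟩
  rintro (n | _ | n)
  · change r (t^[n + 1] a) (t^[n] a)
    rw [Function.iterate_succ_apply']
    exact ht _
  · exact hs a
  · change r (s^[n + 1] a) (s^[n + 1 + 1] a)
    rw [Function.iterate_succ_apply' s (n + 1)]
    exact hs _

/-- A totally acyclic complex is spliced from a bi-infinite sequence of short exact sequences
`0 → K (n + 1) → P n → K n → 0` with all `K n` Gorenstein projective and `K 0 = M`. -/
lemma IsGP.isGProj {M : ModuleCat.{0} R} (hM : IsGP M) : IsGProj (projClass R) M := by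
  obtain ⟨K, hK0, hK⟩ := exists_int_sequence
    (fun A B : {X : ModuleCat.{0} R // IsGP X} => ∃ (P : ModuleCat.{0} R) (f : A.1 ⟶ P)
      (g : P ⟶ B.1), Projective P ∧ SES f g)
    (fun A => by
      obtain ⟨P, M', f, g, hP, hM', hs⟩ := A.2.exists_ses
      exact ⟨⟨M', hM'⟩, P, f, g, hP, hs⟩)
    (fun A => by
      obtain ⟨M', P, f, g, hP, hM', hs⟩ := A.2.exists_syzygy
      exact ⟨⟨M', hM'⟩, P, f, g, hP, hs⟩) ⟨M, hM⟩
  choose P f g hP hs using hK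
  have hw : ∀ n, f n ≫ g n = 0 := fun n => (hs n).1
  have hmono : ∀ n, Mono (f n) := fun n => (hs n).2.mono_f
  have hepi : ∀ n, Epi (g n) := fun n => (hs n).2.epi_g
  let C : ChainComplex (ModuleCat.{0} R) ℤ := ChainComplex.of P (fun n => g (n + 1) ≫ f n)
    (fun n => by simp [reassoc_of% (hw (n + 1))])
  have hd : ∀ n, C.d (n + 1) n = g (n + 1) ≫ f n := fun n =>
    ChainComplex.of_d P (fun n => g (n + 1) ≫ f n) n
  refine ⟨C, ⟨hP, ?_, ?_⟩, -1, ?_⟩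
  · intro n
    obtain ⟨k, rfl⟩ : ∃ k, n = k + 1 := ⟨n - 1, by omega⟩
    have : (C.sc' (k + 1 + 1) (k + 1) k).Exact := by
      rw [ShortComplex.moduleCat_exact_iff]
      intro (x : P (k + 1)) hx
      have hx' : f k (g (k + 1) x) = 0 := by
        have : C.d (k + 1) k x = 0 := hx
        rwa [hd] at this
      have h1 := (ses_iff _ _).1 (hs k)
      have h2 := (ses_iff _ _).1 (hs (k + 1))
      have h3 := (ses_iff _ _).1 (hs (k + 1 + 1))
      have hx'' : g (k + 1) x = 0 := h1.1 (by rw [hx', map_zero])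
      obtain ⟨y, rfl⟩ := (h2.2.2 x).1 hx''
      obtain ⟨z, rfl⟩ := h3.2.1 y
      refine ⟨z, ?_⟩
      change C.d (k + 1 + 1) (k + 1) z = _
      rw [hd]
      rfl
    exact (C.exactAt_iff' (k + 1 + 1) (k + 1) k (by simp) (by simp)).2 this
  · intro T hT n φ hφ
    obtain ⟨k, rfl⟩ : ∃ k, n = k + 1 := ⟨n - 1, by omega⟩
    obtain ⟨l, hl⟩ : ∃ l, l = k + 1 - 1 := ⟨_, rfl⟩
    rw [← hl]
    obtain rfl : l = k := by omega
    change P (l + 1) ⟶ T at φ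
    rw [hd, Category.assoc] at hφ
    have hφ' : f (l + 1) ≫ φ = 0 := (cancel_epi (g (l + 1 + 1))).1 (hφ.trans comp_zero.symm)
    -- `φ` descends to the next kernel `K (l + 1)`, and extends from there to `P l`
    obtain ⟨ψ, hψ⟩ := (K l).2.extAcyclic.exists_extend (hs l) hT
      ((hs (l + 1)).2.gIsCokernel.desc (CokernelCofork.ofπ φ hφ'))
    refine ⟨ψ, ?_⟩
    rw [hd, Category.assoc]
    refine (congrArg (g (l + 1) ≫ ·) hψ).trans ?_
    exact (hs (l + 1)).2.gIsCokernel.fac (CokernelCofork.ofπ φ hφ') WalkingParallelPair.one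
  · have key : ∀ i j : ℤ, i = j + 1 → Nonempty ((K (i + 1)).1 ≅ kernel (C.d i j)) := by
      rintro _ j rfl
      rw [hd]
      exact ⟨(hs (j + 1)).2.fIsKernel.conePointUniqueUpToIso (kernelIsKernel _) ≪≫
        (kernelCompMono _ _).symm⟩
    have := key (-1) (-1 - 1) rfl
    have h0 : K (-1 + 1) = ⟨M, hM⟩ := hK0
    rwa [h0] at this

lemma isGProj_iff_isGP (M : ModuleCat.{0} R) : IsGProj (projClass R) M ↔ IsGP M := by
  refine ⟨?_, IsGP.isGProj⟩
  rintro ⟨C, hC, n, ⟨e⟩⟩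
  exact (hC.isGP_kernel (by omega)).of_retract e.hom e.inv e.hom_inv_id

/-! ### Projective modules in the class `𝓛` -/

/-- A Gorenstein projective module that is itself a test module is projective: it is the image
`Z ⊆ X n` of a differential `X (n + 1) → X n`, and `Hom(-, Z)`-exactness extends the corestriction
`X (n + 1) → Z` of this differential to a retraction `X n → Z`. -/
lemma IsGProj.projective_of_mem {𝓣 : Set (ModuleCat.{0} R)}
    (hiso : ∀ {M N : ModuleCat.{0} R}, (M ≅ N) → M ∈ 𝓣 → N ∈ 𝓣) {M : ModuleCat.{0} R}
    (h : IsGProj 𝓣 M) (hM : M ∈ 𝓣) : Projective M := by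
  obtain ⟨C, hC, n, ⟨e⟩⟩ := h
  have hs := hC.ses (i := n + 1) (j := n) (k := n - 1) rfl (by omega)
  set π := kernel.lift (C.d n (n - 1)) (C.d (n + 1) n) (C.d_comp_d _ _ _) with hπ
  have hπι : π ≫ kernel.ι (C.d n (n - 1)) = C.d (n + 1) n := kernel.lift_ι _ _ _
  have hepi : Epi π := hs.2.epi_g
  obtain ⟨ψ, hψ⟩ := hC.homExact' (hiso e hM) (i := n + 1 + 1) (j := n + 1) (k := n) rfl rfl π (by
    rw [← cancel_mono (kernel.ι _), Category.assoc, hπι]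
    simp)
  have hr : kernel.ι (C.d n (n - 1)) ≫ ψ = 𝟙 _ := by
    rw [← cancel_epi π, ← Category.assoc, hπι, hψ, Category.comp_id]
  have := hC.projective n
  have hretr : (e.hom ≫ kernel.ι (C.d n (n - 1))) ≫ ψ ≫ e.inv = 𝟙 M := by
    rw [Category.assoc, reassoc_of% hr, e.hom_inv_id]
  exact Retract.projective ⟨_, _, hretr⟩

/-- Every projective is a summand of a direct sum of copies of `R`. -/
lemma CompleteDualityPair.projective_mem {𝓛 : Set (ModuleCat.{0} R)}
    {𝓐 : Set (ModuleCat.{0} Rᵐᵒᵖ)} (hdp : CompleteDualityPair 𝓛 𝓐) {P : ModuleCat.{0} R}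
    (hP : Projective P) : P ∈ 𝓛 := by
  classical
  have : Module.Projective R P := (IsProjective.iff_projective P).2 hP
  obtain ⟨s, hs⟩ := Module.projective_def'.1 this
  have h := hdp.coprod_L P (fun _ => ModuleCat.of R R) fun _ => hdp.self_mem
  let e : (P →₀ R) ≃ₗ[R] (⨁ _ : P, R) := finsuppLEquivDirectSum R R P
  refine hdp.summands_L _ h P (ModuleCat.ofHom (e.toLinearMap ∘ₗ s))
    (ModuleCat.ofHom (Finsupp.linearCombination R id ∘ₗ e.symm.toLinearMap)) ?_
  ext x
  have := LinearMap.congr_fun hs x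
  simpa using this

theorem stmt13
    (R : Type) [Ring R] (𝓛 : Set (ModuleCat.{0} R)) (𝓐 : Set (ModuleCat.{0} Rᵐᵒᵖ))
    (hdp : CompleteDualityPair 𝓛 𝓐) :
    LeftFrobeniusPair {G : ModuleCat.{0} R | IsGProj 𝓛 G} 𝓛 ↔
      𝓛 = {P : ModuleCat.{0} R | Projective P} := by
  constructor
  · intro hF
    ext P
    exact ⟨fun hP => IsGProj.projective_of_mem hdp.isoClosed_L (hF.subset hP) hP,
      fun hP => hdp.projective_mem hP⟩
  · rintro rfl
    have hiff : {G : ModuleCat.{0} R | IsGProj {P : ModuleCat.{0} R | Projective P} G} =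
        {G | IsGP G} := Set.ext fun G => isGProj_iff_isGP G
    rw [hiff]
    exact
      { summands_X := fun X hX Y i p h => IsGP.of_retract hX i p h
        extensions_X := fun f g h hA hC => IsGP.of_extension h hA hC
        kerEpi_X := fun f g h hB hC => IsGP.of_kernel h hB hC
        subset := fun P hP => IsGP.of_projective hP
        inj := by
          rintro X hX W hW (_ | n) hn
          · omega
          · exact extVanish_of_subsingleton X W n (hX.extAcyclic W hW n)
        cogen := fun X hX => by
          obtain ⟨W, X', f, g, hW, hX', hs⟩ := IsGP.exists_ses hX
          exact ⟨W, X', f, g, hW, hX', hs⟩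
        summands_ω := fun W hW V i p h => by
          have : Projective W := hW
          exact Retract.projective ⟨i, p, h⟩ }

end DualityPaper
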